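/- arXiv:2308.13370 — 5 statements merged into one kernel-verified Lean document; each statement's English description precedes it below -/
import Mathlib

section
/- Let U ⊆ ℂ³ be a connected open set and P, Q, A₁, A₂ : U → ℂ holomorphic, with Q not identically zero and A₂ not identically zero on U. Assume the tangency identity x₂·Q·A₁ + P·A₂ = 0 holds on U (this is ω(X_{P,Q}) = 0 for ω with third coefficient A₃ ≡ 0), and assume the integrability identity for ω = (A₁, A₂, 0), namely A₂·∂₃A₁ − A₁·∂₃A₂ = 0 on U. Then Q·∂₃P − P·∂₃Q = 0 on U; i.e. the quotient P/Q does not depend on the variable x₃ wherever it is defined. -/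
/-- Partial derivative with respect to the first coordinate on ℂ³. -/
noncomputable def d1 (f : ℂ × ℂ × ℂ → ℂ) (p : ℂ × ℂ × ℂ) : ℂ :=
  deriv (fun z => f (z, p.2.1, p.2.2)) p.1

/-- Partial derivative with respect to the second coordinate on ℂ³. -/
noncomputable def d2 (f : ℂ × ℂ × ℂ → ℂ) (p : ℂ × ℂ × ℂ) : ℂ :=
  deriv (fun z => f (p.1, z, p.2.2)) p.2.1

/-- Partial derivative with respect to the third coordinate on ℂ³. -/
noncomputable def d3 (f : ℂ × ℂ × ℂ → ℂ) (p : ℂ × ℂ × ℂ) : ℂ :=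
  deriv (fun z => f (p.1, p.2.1, z)) p.2.2

/-- The coefficient of `ω ∧ dω` for `ω = A₁dx₁ + A₂dx₂ + A₃dx₃`; the integrability
condition `ω ∧ dω = 0` says this vanishes. -/
noncomputable def wedgeCoeff (A₁ A₂ A₃ : ℂ × ℂ × ℂ → ℂ) (p : ℂ × ℂ × ℂ) : ℂ :=
  A₁ p * (d2 A₃ p - d3 A₂ p) + A₂ p * (d3 A₁ p - d1 A₃ p) + A₃ p * (d1 A₂ p - d2 A₁ p)


/-!
Write `W(f, g) = f * ∂ᵥg - g * ∂ᵥf` for the Wronskian along a direction `v`. Since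
`W(h * f, h * g) = h² * W(f, g)`, tangency in the form `A₂ * P = Q * (-x₂ * A₁)` gives
`A₂² * W(Q, P) = W(A₂ * Q, A₂ * P) = Q² * W(A₂, -x₂ * A₁) = -x₂ * Q² * W(A₂, A₁) = 0`, as `x₂` is
constant along `v = (0, 0, 1)`. So `W(Q, P)` vanishes where `A₂ ≠ 0`; by the identity theorem this
set is dense in `U`, and `W(Q, P)` is continuous by Cauchy estimates.
-/

open Set Filter Topology Metric

section IdentityTheorem

variable {E F : Type*} [NormedAddCommGroup E] [NormedSpace ℂ E]
  [NormedAddCommGroup F] [NormedSpace ℂ F] [CompleteSpace F] {f : E → F} {U : Set E}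

theorem eqOn_zero_of_convex_of_eventuallyEq_zero (hf : DifferentiableOn ℂ f U) (hU : IsOpen U)
    (hUc : Convex ℝ U) {x : E} (hx : x ∈ U) (hfx : f =ᶠ[𝓝 x] 0) : EqOn f 0 U := by
  intro y hy
  let line : ℂ → E := fun t => x + t • (y - x)
  have hline : Differentiable ℂ line := by fun_prop
  have line_zero : line 0 = x := by simp [line]
  have line_one : line 1 = y := by simp [line]
  have hconv : Convex ℝ (line ⁻¹' U) := (hUc.translate_preimage_right x).linear_preimage
    ((LinearMap.toSpanSingleton ℂ E (y - x)).restrictScalars ℝ)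
  have hana : AnalyticOnNhd ℂ (f ∘ line) (line ⁻¹' U) :=
    (hf.comp hline.differentiableOn fun _ ht => ht).analyticOnNhd (hU.preimage hline.continuous)
  have hzero : f ∘ line =ᶠ[𝓝 0] 0 :=
    (line_zero ▸ hline.continuous.tendsto 0 : Tendsto line (𝓝 0) (𝓝 x)).eventually hfx
  have hone : f (line 1) = 0 := hana.eqOn_zero_of_preconnected_of_eventuallyEq_zero
    hconv.isPreconnected (by rwa [mem_preimage, line_zero]) hzero (by rwa [mem_preimage, line_one])
  rwa [line_one] at hone

theorem eqOn_zero_of_isPreconnected_of_eventuallyEq_zero (hf : DifferentiableOn ℂ f U)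
    (hU : IsOpen U) (hUc : IsPreconnected U) {x : E} (hx : x ∈ U) (hfx : f =ᶠ[𝓝 x] 0) :
    EqOn f 0 U := by
  have hsub : U ⊆ {y | f =ᶠ[𝓝 y] 0} := by
    refine hUc.subset_of_closure_inter_subset isOpen_setOfPred_eventually_nhds ⟨x, hx, hfx⟩ ?_
    rintro y ⟨hy, hyU⟩
    obtain ⟨r, hr, hrU⟩ := Metric.isOpen_iff.mp hU y hyU
    obtain ⟨w, hw, hyw⟩ := Metric.mem_closure_iff.mp hy r hr
    exact (eqOn_zero_of_convex_of_eventuallyEq_zero (hf.mono hrU) isOpen_ball (convex_ball y r)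
      (mem_ball'.mpr hyw) hw).eventuallyEq_of_mem (ball_mem_nhds y hr)
  exact fun y hy => (hsub hy).self_of_nhds

theorem subset_closure_inter_support (hf : DifferentiableOn ℂ f U) (hU : IsOpen U)
    (hUc : IsPreconnected U) (hne : ∃ x ∈ U, f x ≠ 0) : U ⊆ closure (U ∩ f.support) := by
  intro x hx
  by_contra hcl
  obtain ⟨y, hy, hfy⟩ := hne
  refine hfy (eqOn_zero_of_isPreconnected_of_eventuallyEq_zero hf hU hUc hx ?_ hy)
  filter_upwards [hU.mem_nhds hx, isClosed_closure.isOpen_compl.mem_nhds hcl] with z hzU hz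
  by_contra hfz
  exact hz (subset_closure ⟨hzU, hfz⟩)

end IdentityTheorem

section ContinuityOfDerivatives

variable {F : Type*} [NormedAddCommGroup F] [NormedSpace ℂ F] [CompleteSpace F]

theorem continuousOn_deriv_of_continuousOn_prod {X : Type*} [TopologicalSpace X]
    {f : X × ℂ → F} {W : Set (X × ℂ)} (hW : IsOpen W) (hf : ContinuousOn f W)
    (hd : ∀ p ∈ W, DifferentiableAt ℂ (fun z => f (p.1, z)) p.2) :
    ContinuousOn (fun p => deriv (fun z => f (p.1, z)) p.2) W := by
  refine fun ⟨x₀, z₀⟩ hp => ContinuousAt.continuousWithinAt ?_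
  obtain ⟨N, s, hN, hs, hx₀, hz₀, hNs⟩ := isOpen_prod_iff.mp hW x₀ z₀ hp
  have hfst : ∀ᶠ p : X × ℂ in 𝓝 (x₀, z₀), p.1 ∈ N := continuousAt_fst (hN.mem_nhds hx₀)
  have hslice : ∀ x ∈ N, DifferentiableOn ℂ (fun z => f (x, z)) s := fun x hx z hz =>
    (hd (x, z) (hNs ⟨hx, hz⟩)).differentiableWithinAt
  have hunif : TendstoLocallyUniformlyOn (fun p : X × ℂ => fun z => f (p.1, z))
      (fun z => f (x₀, z)) (𝓝 (x₀, z₀)) s := by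
    refine (tendstoLocallyUniformlyOn_iff_forall_isCompact hs).mpr fun K hKs hK u hu => ?_
    obtain ⟨M, hM, hMu⟩ := hK.mem_uniformity_of_prod (f := fun x z => f (x, z))
      (hf.mono ((prod_mono_right hKs).trans hNs)) hx₀ (symm_le_uniformity hu)
    rw [hN.nhdsWithin_eq hx₀] at hM
    exact eventually_of_mem (continuousAt_fst hM) fun p hp => hMu p.1 hp
  have hlimit : ContinuousOn (deriv fun z => f (x₀, z)) s :=
    ((hslice x₀ hx₀).deriv hs).continuousOn
  refine (hunif.deriv (hfst.mono fun p => hslice p.1) hs).tendsto_comp (hlimit z₀ hz₀) hz₀ ?_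
  rw [hs.nhdsWithin_eq hz₀]
  exact continuousAt_snd

theorem continuousOn_lineDeriv_of_differentiableOn {E : Type*} [NormedAddCommGroup E]
    [NormedSpace ℂ E] {f : E → F} {U : Set E} (hf : DifferentiableOn ℂ f U) (hU : IsOpen U)
    (v : E) : ContinuousOn (fun x => lineDeriv ℂ f x v) U := by
  have hline : Continuous fun p : E × ℂ => p.1 + p.2 • v := by fun_prop
  have hderiv := continuousOn_deriv_of_continuousOn_prod (hU.preimage hline)
    (hf.continuousOn.comp hline.continuousOn fun _ hp => hp)
    fun p hp => (hf.differentiableAt (hU.mem_nhds hp)).comp p.2 (by fun_prop)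
  exact hderiv.comp (f := fun x : E => (x, (0 : ℂ))) (by fun_prop) fun x hx => by simpa using hx

end ContinuityOfDerivatives

section LineWronskian

variable {𝕜 E : Type*} [NontriviallyNormedField 𝕜] [NormedAddCommGroup E] [NormedSpace 𝕜 E]

/-- The Wronskian `f * ∂ᵥg - g * ∂ᵥf` of two scalar functions along the direction `v`. Its vanishing
expresses, without division, that `g / f` is constant in the direction `v`. -/
noncomputable def lineWronskian (v : E) (f g : E → 𝕜) (x : E) : 𝕜 :=
  f x * lineDeriv 𝕜 g x v - g x * lineDeriv 𝕜 f x v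

variable {v x : E} {f g h c f' g' : E → 𝕜}

theorem lineDeriv_mul (hf : LineDifferentiableAt 𝕜 f x v) (hg : LineDifferentiableAt 𝕜 g x v) :
    lineDeriv 𝕜 (f * g) x v = lineDeriv 𝕜 f x v * g x + f x * lineDeriv 𝕜 g x v := by
  have h := (HasDerivAt.fun_mul hf.hasLineDerivAt hg.hasLineDerivAt).deriv
  rwa [zero_smul, add_zero] at h

theorem lineWronskian_congr (hf : f =ᶠ[𝓝 x] f') (hg : g =ᶠ[𝓝 x] g') :
    lineWronskian v f g x = lineWronskian v f' g' x := by
  simp only [lineWronskian, hf.eq_of_nhds, hg.eq_of_nhds, hf.lineDeriv_eq, hg.lineDeriv_eq]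

theorem lineWronskian_mul_mul (hh : LineDifferentiableAt 𝕜 h x v)
    (hf : LineDifferentiableAt 𝕜 f x v) (hg : LineDifferentiableAt 𝕜 g x v) :
    lineWronskian v (h * f) (h * g) x = h x ^ 2 * lineWronskian v f g x := by
  simp only [lineWronskian, lineDeriv_mul hh hf, lineDeriv_mul hh hg, Pi.mul_apply]
  ring

theorem lineWronskian_mul_right_of_hasLineDerivAt_zero (hc : HasLineDerivAt 𝕜 c 0 x v)
    (hg : LineDifferentiableAt 𝕜 g x v) :
    lineWronskian v f (c * g) x = c x * lineWronskian v f g x := by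
  simp only [lineWronskian, lineDeriv_mul hc.lineDifferentiableAt hg, hc.lineDeriv, Pi.mul_apply]
  ring

theorem lineWronskian_eq_zero_of_tangency {P Q A₁ A₂ : E → 𝕜}
    (hP : LineDifferentiableAt 𝕜 P x v) (hQ : LineDifferentiableAt 𝕜 Q x v)
    (hA₁ : LineDifferentiableAt 𝕜 A₁ x v) (hA₂ : LineDifferentiableAt 𝕜 A₂ x v)
    (hc : HasLineDerivAt 𝕜 c 0 x v) (htan : c * Q * A₁ + P * A₂ =ᶠ[𝓝 x] 0)
    (hint : lineWronskian v A₂ A₁ x = 0) (hne : A₂ x ≠ 0) : lineWronskian v Q P x = 0 := by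
  have hc' : HasLineDerivAt 𝕜 (-c) 0 x v := by
    simpa only [HasLineDerivAt, Pi.neg_apply, neg_zero] using HasDerivAt.fun_neg hc
  have htan' : A₂ * P =ᶠ[𝓝 x] Q * (-c * A₁) := by
    filter_upwards [htan] with y hy
    simp only [Pi.add_apply, Pi.mul_apply, Pi.neg_apply, Pi.zero_apply] at hy ⊢
    linear_combination hy
  have hcA₁ : LineDifferentiableAt 𝕜 (-c * A₁) x v :=
    DifferentiableAt.mul hc'.lineDifferentiableAt hA₁
  have hsq : A₂ x ^ 2 * lineWronskian v Q P x = 0 := calc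
    A₂ x ^ 2 * lineWronskian v Q P x = lineWronskian v (A₂ * Q) (A₂ * P) x :=
      (lineWronskian_mul_mul hA₂ hQ hP).symm
    _ = lineWronskian v (Q * A₂) (Q * (-c * A₁)) x :=
      lineWronskian_congr (mul_comm A₂ Q).eventuallyEq htan'
    _ = Q x ^ 2 * ((-c) x * lineWronskian v A₂ A₁ x) := by
      rw [lineWronskian_mul_mul hQ hA₂ hcA₁,
        lineWronskian_mul_right_of_hasLineDerivAt_zero hc' hA₁]
    _ = 0 := by rw [hint, mul_zero, mul_zero]
  exact (mul_eq_zero.mp hsq).resolve_left (pow_ne_zero 2 hne)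

theorem continuousOn_lineWronskian {E : Type*} [NormedAddCommGroup E] [NormedSpace ℂ E]
    {f g : E → ℂ} {U : Set E} (hf : DifferentiableOn ℂ f U) (hg : DifferentiableOn ℂ g U)
    (hU : IsOpen U) (v : E) : ContinuousOn (lineWronskian v f g) U :=
  (hf.continuousOn.mul (continuousOn_lineDeriv_of_differentiableOn hg hU v)).sub
    (hg.continuousOn.mul (continuousOn_lineDeriv_of_differentiableOn hf hU v))

end LineWronskian

theorem stmt_3_general {E : Type*} [NormedAddCommGroup E] [NormedSpace ℂ E] {U : Set E} {v : E}
    {c P Q A₁ A₂ : E → ℂ} (hU : IsOpen U) (hUconn : IsPreconnected U)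
    (hP : DifferentiableOn ℂ P U) (hQ : DifferentiableOn ℂ Q U)
    (hA₁ : DifferentiableOn ℂ A₁ U) (hA₂ : DifferentiableOn ℂ A₂ U)
    (hc : ∀ x ∈ U, HasLineDerivAt ℂ c 0 x v) (hA₂ne : ∃ x ∈ U, A₂ x ≠ 0)
    (htan : ∀ x ∈ U, c x * Q x * A₁ x + P x * A₂ x = 0)
    (hint : ∀ x ∈ U, lineWronskian v A₂ A₁ x = 0) :
    ∀ x ∈ U, lineWronskian v Q P x = 0 := by
  have hlineDiff {f : E → ℂ} (hf : DifferentiableOn ℂ f U) {x : E} (hx : x ∈ U) :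
      LineDifferentiableAt ℂ f x v :=
    (hf.differentiableAt (hU.mem_nhds hx)).lineDifferentiableAt
  have hsupport : EqOn (lineWronskian v Q P) 0 (U ∩ A₂.support) := fun x ⟨hx, hne⟩ =>
    lineWronskian_eq_zero_of_tangency (hlineDiff hP hx) (hlineDiff hQ hx) (hlineDiff hA₁ hx)
      (hlineDiff hA₂ hx) (hc x hx) (eventuallyEq_of_mem (hU.mem_nhds hx) htan) (hint x hx) hne
  exact hsupport.of_subset_closure (continuousOn_lineWronskian hQ hP hU v) continuousOn_const
    inter_subset_left (subset_closure_inter_support hA₂ hU hUconn hA₂ne)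

theorem d3_eq_lineDeriv (f : ℂ × ℂ × ℂ → ℂ) (x : ℂ × ℂ × ℂ) :
    d3 f x = lineDeriv ℂ f x (0, 0, 1) := by
  obtain ⟨a, b, c⟩ := x
  have h := deriv_comp_const_add (fun z => f (a, b, z)) c 0
  simpa [d3, lineDeriv] using h.symm

/-- if an integrable 1-form `ω = (A₁, A₂, 0)` annihilates `X_{P,Q}`,
then `P/Q` does not depend on the third variable. -/
theorem stmt_3 (U : Set (ℂ × ℂ × ℂ)) (hU : IsOpen U) (hUconn : IsConnected U)
    (P Q A₁ A₂ : ℂ × ℂ × ℂ → ℂ)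
    (hP : DifferentiableOn ℂ P U) (hQ : DifferentiableOn ℂ Q U)
    (hA₁ : DifferentiableOn ℂ A₁ U) (hA₂ : DifferentiableOn ℂ A₂ U)
    (hQne : ¬ (∀ x ∈ U, Q x = 0))
    (hA₂ne : ¬ (∀ x ∈ U, A₂ x = 0))
    (htan : ∀ x ∈ U, x.2.1 * Q x * A₁ x + P x * A₂ x = 0)
    (hint : ∀ x ∈ U, A₂ x * d3 A₁ x - A₁ x * d3 A₂ x = 0) :
    ∀ x ∈ U, Q x * d3 P x - P x * d3 Q x = 0 := by
  simp only [d3_eq_lineDeriv] at hint ⊢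
  exact stmt_3_general hU hUconn.isPreconnected hP hQ hA₁ hA₂
    (fun x _ => by simp [HasLineDerivAt, hasDerivAt_const]) (by simpa using hA₂ne) htan hint
end

section
/- Let T ⊆ ℂ be open and a, b, c : T → ℂ holomorphic. On U := ℂ² × T with coordinates (x₁,x₂,x₃), define the vector field X = (x₂·a(x₃), −(b(x₃)·x₂ + c(x₃)·x₁), a(x₃)) (associated with the linear second-order ODE a(t)u'' + b(t)u' + c(t)u = 0) and the 1-form ω with coefficients (−a(x₃)·x₂, a(x₃)·x₁, a(x₃)·x₂² + b(x₃)·x₁x₂ + c(x₃)·x₁²). Then ω(X) = 0 at every point of U, and ω satisfies the integrability identity A₁(∂₂A₃ − ∂₃A₂) + A₂(∂₃A₁ − ∂₁A₃) + A₃(∂₁A₂ − ∂₂A₁) = 0 on U. (Thus every linear second-order ODE admits a 2-flag of foliations.) -/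
/-! With `η = x₁dx₂ - x₂dx₁` and `E = x₁∂₁ + x₂∂₂`, a 1-form `ω = f η + q dx₃` satisfies
`ω ∧ dω = (f (2q - E q) + q E f) dx₁ ∧ dx₂ ∧ dx₃`. By Euler's identity this vanishes as soon as `f`
and `q` are homogeneous in `(x₁, x₂)` of degrees `k` and `k + 2`. The form attached to a linear
equation has `f = a(x₃)`, of degree `0`, and `q` a quadratic form in `(x₁, x₂)`. -/

/-- The Euler operator `x₁∂₁ + x₂∂₂` of the `(x₁, x₂)`-planes, which measures the degree of
homogeneity in these two coordinates. -/
noncomputable def planarEuler (f : ℂ × ℂ × ℂ → ℂ) (p : ℂ × ℂ × ℂ) : ℂ :=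
  p.1 * d1 f p + p.2.1 * d2 f p

/-- Homogeneity of degree `k` in `(x₁, x₂)`, with `x₃` as a parameter. -/
def IsPlanarHomogeneous (f : ℂ × ℂ × ℂ → ℂ) (k : ℕ) : Prop :=
  ∀ s x y t : ℂ, f (s * x, s * y, t) = s ^ k * f (x, y, t)

section

variable {f q : ℂ × ℂ × ℂ → ℂ} {k : ℕ} {x y t : ℂ}

theorem planarEuler_eq_fderiv (hf : DifferentiableAt ℂ (fun u : ℂ × ℂ => f (u.1, u.2, t)) (x, y)) :
    planarEuler f (x, y, t) = fderiv ℂ (fun u : ℂ × ℂ => f (u.1, u.2, t)) (x, y) (x, y) := by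
  set L := fderiv ℂ (fun u : ℂ × ℂ => f (u.1, u.2, t)) (x, y)
  have h₁ : d1 f (x, y, t) = L (1, 0) :=
    (hf.hasFDerivAt.comp_hasDerivAt (f := fun z => (z, y)) x ((hasDerivAt_id x).prodMk
      (hasDerivAt_const x y))).deriv
  have h₂ : d2 f (x, y, t) = L (0, 1) :=
    (hf.hasFDerivAt.comp_hasDerivAt (f := fun z => (x, z)) y ((hasDerivAt_const y x).prodMk
      (hasDerivAt_id y))).deriv
  calc planarEuler f (x, y, t) = x • L (1, 0) + y • L (0, 1) := by
        simp only [planarEuler, h₁, h₂, smul_eq_mul]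
    _ = L (x, y) := by
        rw [← map_smul, ← map_smul, ← map_add]
        simp

theorem IsPlanarHomogeneous.planarEuler_eq (hf : IsPlanarHomogeneous f k)
    (hd : DifferentiableAt ℂ (fun u : ℂ × ℂ => f (u.1, u.2, t)) (x, y)) :
    planarEuler f (x, y, t) = k * f (x, y, t) := by
  have hline : HasDerivAt (fun s : ℂ => (s * x, s * y)) (x, y) 1 := by
    simpa using ((hasDerivAt_id (1 : ℂ)).mul_const x).prodMk ((hasDerivAt_id (1 : ℂ)).mul_const y)
  have hchain : HasDerivAt (fun s : ℂ => f (s * x, s * y, t)) (planarEuler f (x, y, t)) 1 := by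
    rw [planarEuler_eq_fderiv hd]
    exact hd.hasFDerivAt.comp_hasDerivAt_of_eq 1 hline (by simp)
  have hpow : HasDerivAt (fun s : ℂ => f (s * x, s * y, t)) (k * f (x, y, t)) 1 := by
    simpa [hf _ x y t] using (hasDerivAt_pow k (1 : ℂ)).mul_const (f (x, y, t))
  exact hchain.unique hpow

theorem wedgeCoeff_rotational_add (hf : DifferentiableAt ℂ f (x, y, t)) :
    wedgeCoeff (fun p => -(f p * p.2.1)) (fun p => f p * p.1) q (x, y, t) =
      f (x, y, t) * (2 * q (x, y, t) - planarEuler q (x, y, t)) +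
        q (x, y, t) * planarEuler f (x, y, t) := by
  have hf₁ : DifferentiableAt ℂ (fun z => f (z, y, t)) x := hf.comp x (by fun_prop)
  have hf₂ : DifferentiableAt ℂ (fun z => f (x, z, t)) y :=
    hf.comp (f := fun z => (x, z, t)) y (by fun_prop)
  have hf₃ : DifferentiableAt ℂ (fun z => f (x, y, z)) t :=
    hf.comp (f := fun z => (x, y, z)) t (by fun_prop)
  have h₁₂ : d1 (fun p => f p * p.1) (x, y, t) = d1 f (x, y, t) * x + f (x, y, t) * 1 :=
    (hf₁.hasDerivAt.mul (hasDerivAt_id x)).deriv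
  have h₂₁ : d2 (fun p => -(f p * p.2.1)) (x, y, t) = -(d2 f (x, y, t) * y + f (x, y, t) * 1) :=
    (hf₂.hasDerivAt.mul (hasDerivAt_id y)).neg.deriv
  have h₃₁ : d3 (fun p => -(f p * p.2.1)) (x, y, t) = -(d3 f (x, y, t) * y) :=
    (hf₃.hasDerivAt.mul_const y).neg.deriv
  have h₃₂ : d3 (fun p => f p * p.1) (x, y, t) = d3 f (x, y, t) * x :=
    (hf₃.hasDerivAt.mul_const x).deriv
  simp only [wedgeCoeff, h₁₂, h₂₁, h₃₁, h₃₂, planarEuler]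
  ring

theorem wedgeCoeff_rotational_add_eq_zero (hf : IsPlanarHomogeneous f k)
    (hq : IsPlanarHomogeneous q (k + 2)) (hfd : DifferentiableAt ℂ f (x, y, t))
    (hqd : DifferentiableAt ℂ (fun u : ℂ × ℂ => q (u.1, u.2, t)) (x, y)) :
    wedgeCoeff (fun p => -(f p * p.2.1)) (fun p => f p * p.1) q (x, y, t) = 0 := by
  have hfd' : DifferentiableAt ℂ (fun u : ℂ × ℂ => f (u.1, u.2, t)) (x, y) :=
    hfd.comp (f := fun u : ℂ × ℂ => (u.1, u.2, t)) (x, y) (by fun_prop)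
  rw [wedgeCoeff_rotational_add hfd, hf.planarEuler_eq hfd', hq.planarEuler_eq hqd]
  push_cast
  ring

end

theorem isPlanarHomogeneous_quadratic (a b c : ℂ → ℂ) :
    IsPlanarHomogeneous
      (fun p => a p.2.2 * p.2.1 ^ 2 + b p.2.2 * (p.1 * p.2.1) + c p.2.2 * p.1 ^ 2) 2 := by
  intro s x y t
  ring

theorem stmt_13_general (T : Set ℂ) (hT : IsOpen T) (a b c : ℂ → ℂ)
    (ha : DifferentiableOn ℂ a T) :
    let U : Set (ℂ × ℂ × ℂ) := {x | x.2.2 ∈ T}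
    let X₁ : ℂ × ℂ × ℂ → ℂ := fun x => x.2.1 * a x.2.2
    let X₂ : ℂ × ℂ × ℂ → ℂ := fun x => -(b x.2.2 * x.2.1 + c x.2.2 * x.1)
    let X₃ : ℂ × ℂ × ℂ → ℂ := fun x => a x.2.2
    let A₁ : ℂ × ℂ × ℂ → ℂ := fun x => -(a x.2.2 * x.2.1)
    let A₂ : ℂ × ℂ × ℂ → ℂ := fun x => a x.2.2 * x.1
    let A₃ : ℂ × ℂ × ℂ → ℂ := fun x =>
      a x.2.2 * x.2.1 ^ 2 + b x.2.2 * (x.1 * x.2.1) + c x.2.2 * x.1 ^ 2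
    (∀ x ∈ U, A₁ x * X₁ x + A₂ x * X₂ x + A₃ x * X₃ x = 0) ∧
    (∀ x ∈ U, wedgeCoeff A₁ A₂ A₃ x = 0) := by
  intro U X₁ X₂ X₃ A₁ A₂ A₃
  refine ⟨fun x _ => by simp only [A₁, A₂, A₃, X₁, X₂, X₃]; ring, ?_⟩
  rintro ⟨x, y, t⟩ (ht : t ∈ T)
  have hhom : IsPlanarHomogeneous (fun p => a p.2.2) 0 := fun s x y t => by simp
  have hdiff : DifferentiableAt ℂ (fun p : ℂ × ℂ × ℂ => a p.2.2) (x, y, t) :=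
    (ha.differentiableAt (hT.mem_nhds ht)).comp (x, y, t) (by fun_prop)
  exact wedgeCoeff_rotational_add_eq_zero hhom (isPlanarHomogeneous_quadratic a b c) hdiff
    (by simp only [A₃]; fun_prop)

/-- every linear second-order ODE `a(t)u'' + b(t)u' + c(t)u = 0` admits a
2-flag: the stated 1-form annihilates the associated vector field and is integrable. -/
theorem stmt_13 (T : Set ℂ) (hT : IsOpen T) (a b c : ℂ → ℂ)
    (ha : DifferentiableOn ℂ a T) (hb : DifferentiableOn ℂ b T)
    (hc : DifferentiableOn ℂ c T) :
    let U : Set (ℂ × ℂ × ℂ) := {x | x.2.2 ∈ T}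
    let X₁ : ℂ × ℂ × ℂ → ℂ := fun x => x.2.1 * a x.2.2
    let X₂ : ℂ × ℂ × ℂ → ℂ := fun x => -(b x.2.2 * x.2.1 + c x.2.2 * x.1)
    let X₃ : ℂ × ℂ × ℂ → ℂ := fun x => a x.2.2
    let A₁ : ℂ × ℂ × ℂ → ℂ := fun x => -(a x.2.2 * x.2.1)
    let A₂ : ℂ × ℂ × ℂ → ℂ := fun x => a x.2.2 * x.1
    let A₃ : ℂ × ℂ × ℂ → ℂ := fun x =>
      a x.2.2 * x.2.1 ^ 2 + b x.2.2 * (x.1 * x.2.1) + c x.2.2 * x.1 ^ 2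
    (∀ x ∈ U, A₁ x * X₁ x + A₂ x * X₂ x + A₃ x * X₃ x = 0) ∧
    (∀ x ∈ U, wedgeCoeff A₁ A₂ A₃ x = 0) :=
  stmt_13_general T hT a b c ha
end

section
/- Let k ∈ ℂ and let n ≥ 1, s ≥ 1 be integers; set m := −s (so m < 0, as in the Emden–Fowler equation u'' = k·t^m·uⁿ with m < 0 < n). On ℂ³ with coordinates (x₁,x₂,x₃) define the polynomial vector field X = (x₂·x₃^s, k·x₁ⁿ, x₃^s) and the polynomial 1-form ω with coefficients A₁ = −((n−1)·k·x₁ⁿ·x₃ + (m+n+1)·x₂·x₃^s), A₂ = x₃^s·((n−1)·x₂·x₃ + (m+2)·x₁), A₃ = −(k·(m+2)·x₁^{n+1} − (m+n+1)·x₂²·x₃^s), where the integers n−1, m+n+1, m+2 are regarded as elements of ℂ. Then ω(X) = 0 at every point of ℂ³, and ω satisfies the integrability identity A₁(∂₂A₃ − ∂₃A₂) + A₂(∂₃A₁ − ∂₁A₃) + A₃(∂₁A₂ − ∂₂A₁) = 0 on ℂ³. -/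
/-!
The Emden–Fowler equation is invariant under a one-parameter group of scalings
`(u, t) ↦ (λᵃu, λᶜt)`, whose generator `Y` on ℂ³ satisfies `[Y, X] = μ X`. The form `ω` is
`dx₁ ∧ dx₂ ∧ dx₃ (X, Y, ·)`, with coefficient vector `X × Y`. It annihilates `X` because
`X × Y ⟂ X`, and by the identity `(X × Y) · curl (X × Y) = (X × Y) · [Y, X]` it is integrable: in
`curl (X × Y) = (div Y) X - (div X) Y + [Y, X]` the divergence terms are orthogonal to `X × Y`.
-/

open VectorField
open scoped Matrix

/-- The identification of the iterated product `𝕜 × 𝕜 × 𝕜`, on which the vector fields live, with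
`Fin 3 → 𝕜`, on which the cross product is defined. -/
noncomputable def coords (𝕜 : Type*) [NontriviallyNormedField 𝕜] : 𝕜 × 𝕜 × 𝕜 →L[𝕜] Fin 3 → 𝕜 :=
  .pi ![.fst 𝕜 𝕜 (𝕜 × 𝕜), .fst 𝕜 𝕜 𝕜 ∘L .snd 𝕜 𝕜 (𝕜 × 𝕜), .snd 𝕜 𝕜 𝕜 ∘L .snd 𝕜 𝕜 (𝕜 × 𝕜)]

lemma coords_apply {𝕜 : Type*} [NontriviallyNormedField 𝕜] (v : 𝕜 × 𝕜 × 𝕜) :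
    coords 𝕜 v = ![v.1, v.2.1, v.2.2] := by
  ext i
  fin_cases i <;> rfl

section PartialDerivatives

variable {f : ℂ × ℂ × ℂ → ℂ} {p : ℂ × ℂ × ℂ}

lemma d1_eq_fderiv (hf : DifferentiableAt ℂ f p) : d1 f p = fderiv ℂ f p (1, 0, 0) :=
  (hf.hasFDerivAt.comp_hasDerivAt p.1
    ((hasDerivAt_id _).prodMk ((hasDerivAt_const _ _).prodMk (hasDerivAt_const _ _)))).deriv

lemma d2_eq_fderiv (hf : DifferentiableAt ℂ f p) : d2 f p = fderiv ℂ f p (0, 1, 0) :=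
  (hf.hasFDerivAt.comp_hasDerivAt p.2.1
    ((hasDerivAt_const _ _).prodMk ((hasDerivAt_id _).prodMk (hasDerivAt_const _ _)))).deriv

lemma d3_eq_fderiv (hf : DifferentiableAt ℂ f p) : d3 f p = fderiv ℂ f p (0, 0, 1) :=
  (hf.hasFDerivAt.comp_hasDerivAt p.2.2
    ((hasDerivAt_const _ _).prodMk ((hasDerivAt_const _ _).prodMk (hasDerivAt_id _)))).deriv

end PartialDerivatives

lemma map_eq_sum_smul_basis {R M : Type*} [Semiring R] [AddCommMonoid M] [Module R M]
    (L : R × R × R →ₗ[R] M) (v : R × R × R) :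
    L v = v.1 • L (1, 0, 0) + v.2.1 • L (0, 1, 0) + v.2.2 • L (0, 0, 1) := by
  simp [← map_smul, ← map_add]

section VolumeContraction

variable {𝕜 : Type*} [NontriviallyNormedField 𝕜]

/-- The coefficient vector of the 1-form `dx₁ ∧ dx₂ ∧ dx₃ (X, Y, ·)`, the contraction of the
volume form with two vector fields. -/
noncomputable def volumeContraction (X Y : 𝕜 × 𝕜 × 𝕜 → 𝕜 × 𝕜 × 𝕜) (p : 𝕜 × 𝕜 × 𝕜) : Fin 3 → 𝕜 :=
  coords 𝕜 (X p) ⨯₃ coords 𝕜 (Y p)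

lemma volumeContraction_dot_coords_left (X Y : 𝕜 × 𝕜 × 𝕜 → 𝕜 × 𝕜 × 𝕜) (p : 𝕜 × 𝕜 × 𝕜) :
    volumeContraction X Y p ⬝ᵥ coords 𝕜 (X p) = 0 :=
  (dotProduct_comm _ _).trans (dot_self_cross _ _)

/-- The cross product as a continuous bilinear map, the form in which the product rule for
bilinear maps applies to it. -/
noncomputable def crossProductCLM (𝕜 : Type*) [NontriviallyNormedField 𝕜] [CompleteSpace 𝕜] :
    (Fin 3 → 𝕜) →L[𝕜] (Fin 3 → 𝕜) →L[𝕜] Fin 3 → 𝕜 :=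
  crossProduct.toContinuousBilinearMap

lemma hasFDerivAt_volumeContraction [CompleteSpace 𝕜]
    {X Y : 𝕜 × 𝕜 × 𝕜 → 𝕜 × 𝕜 × 𝕜} {X' Y' : 𝕜 × 𝕜 × 𝕜 →L[𝕜] 𝕜 × 𝕜 × 𝕜} {p : 𝕜 × 𝕜 × 𝕜}
    (hX : HasFDerivAt X X' p) (hY : HasFDerivAt Y Y' p) :
    HasFDerivAt (volumeContraction X Y)
      ((crossProductCLM 𝕜).precompR _ (coords 𝕜 (X p)) (coords 𝕜 ∘L Y') +
        (crossProductCLM 𝕜).precompL _ (coords 𝕜 ∘L X') (coords 𝕜 (Y p))) p :=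
  (crossProductCLM 𝕜).hasFDerivAt_of_bilinear
    ((coords 𝕜).hasFDerivAt.comp p hX) ((coords 𝕜).hasFDerivAt.comp p hY)

lemma fderiv_volumeContraction_apply [CompleteSpace 𝕜]
    {X Y : 𝕜 × 𝕜 × 𝕜 → 𝕜 × 𝕜 × 𝕜} {p : 𝕜 × 𝕜 × 𝕜} (hX : DifferentiableAt 𝕜 X p)
    (hY : DifferentiableAt 𝕜 Y p) (v : 𝕜 × 𝕜 × 𝕜) :
    fderiv 𝕜 (volumeContraction X Y) p v =
      coords 𝕜 (X p) ⨯₃ coords 𝕜 (fderiv 𝕜 Y p v) +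
        coords 𝕜 (fderiv 𝕜 X p v) ⨯₃ coords 𝕜 (Y p) := by
  rw [(hasFDerivAt_volumeContraction hX.hasFDerivAt hY.hasFDerivAt).fderiv]
  rfl

theorem wedgeCoeff_volumeContraction {X Y : ℂ × ℂ × ℂ → ℂ × ℂ × ℂ} {p : ℂ × ℂ × ℂ}
    (hX : DifferentiableAt ℂ X p) (hY : DifferentiableAt ℂ Y p) :
    wedgeCoeff (volumeContraction X Y · 0) (volumeContraction X Y · 1)
        (volumeContraction X Y · 2) p =
      volumeContraction X Y p ⬝ᵥ coords ℂ (lieBracket ℂ Y X p) := by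
  have hω := (hasFDerivAt_volumeContraction hX.hasFDerivAt hY.hasFDerivAt).differentiableAt
  have hωi (i : Fin 3) : DifferentiableAt ℂ (volumeContraction X Y · i) p :=
    differentiableAt_pi.1 hω i
  have hfderiv (i : Fin 3) (v : ℂ × ℂ × ℂ) :
      fderiv ℂ (volumeContraction X Y · i) p v = fderiv ℂ (volumeContraction X Y) p v i := by
    rw [fderiv_apply hω]
    rfl
  simp only [wedgeCoeff, d1_eq_fderiv (hωi _), d2_eq_fderiv (hωi _), d3_eq_fderiv (hωi _),
    hfderiv, fderiv_volumeContraction_apply hX hY]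
  have hDX := map_eq_sum_smul_basis (fderiv ℂ X p).toLinearMap (Y p)
  have hDY := map_eq_sum_smul_basis (fderiv ℂ Y p).toLinearMap (X p)
  simp only [ContinuousLinearMap.coe_coe] at hDX hDY
  simp only [lieBracket_eq, hDX, hDY, volumeContraction, coords_apply, cross_apply,
    Matrix.vec3_dotProduct, Matrix.cons_val, Pi.add_apply, Prod.fst_sub, Prod.snd_sub, Prod.fst_add,
    Prod.snd_add, Prod.smul_fst, Prod.smul_snd, smul_eq_mul]
  ring

theorem wedgeCoeff_volumeContraction_eq_zero {X Y : ℂ × ℂ × ℂ → ℂ × ℂ × ℂ} {p : ℂ × ℂ × ℂ} {μ : ℂ}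
    (hX : DifferentiableAt ℂ X p) (hY : DifferentiableAt ℂ Y p)
    (hXY : lieBracket ℂ Y X p = μ • X p) :
    wedgeCoeff (volumeContraction X Y · 0) (volumeContraction X Y · 1)
      (volumeContraction X Y · 2) p = 0 := by
  rw [wedgeCoeff_volumeContraction hX hY, hXY, map_smul, dotProduct_smul,
    volumeContraction_dot_coords_left, smul_zero]

end VolumeContraction

section LieEigenfunction

variable {𝕜 E : Type*} [NontriviallyNormedField 𝕜] [NormedAddCommGroup E] [NormedSpace 𝕜 E]

/-- `f` is an eigenfunction, of eigenvalue `w`, of the derivation defined by the vector field `Y`.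
For the generator `Y` of a group of scalings this is Euler's relation, saying that `f` is
quasi-homogeneous of degree `w`. -/
structure IsLieEigenfunction (Y : E → E) (w : 𝕜) (f : E → 𝕜) : Prop where
  differentiable : Differentiable 𝕜 f
  fderiv_apply (p : E) : fderiv 𝕜 f p (Y p) = w * f p

namespace IsLieEigenfunction

variable {Y : E → E} {v w : 𝕜} {f g : E → 𝕜}

lemma const (c : 𝕜) : IsLieEigenfunction Y 0 fun _ ↦ c :=
  ⟨differentiable_const c, by simp⟩

lemma mul (hf : IsLieEigenfunction Y v f) (hg : IsLieEigenfunction Y w g) :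
    IsLieEigenfunction Y (v + w) fun p ↦ f p * g p where
  differentiable := hf.differentiable.mul hg.differentiable
  fderiv_apply p := by
    rw [fderiv_fun_mul (hf.differentiable p) (hg.differentiable p)]
    simp only [add_apply, smul_apply, smul_eq_mul, hf.fderiv_apply, hg.fderiv_apply]
    ring

lemma const_mul (c : 𝕜) (hf : IsLieEigenfunction Y w f) :
    IsLieEigenfunction Y w fun p ↦ c * f p := by
  simpa using (const c).mul hf

lemma pow (hf : IsLieEigenfunction Y w f) (n : ℕ) :
    IsLieEigenfunction Y (n * w) fun p ↦ f p ^ n := by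
  induction n with
  | zero => simpa using const (Y := Y) (1 : 𝕜)
  | succ n ih => simpa [pow_succ, add_mul] using ih.mul hf

end IsLieEigenfunction

end LieEigenfunction

section Scaling

variable {𝕜 : Type*} [NontriviallyNormedField 𝕜]

/-- The linear vector field `(w₁x₁, w₂x₂, w₃x₃)` generating the scalings with weights `w`, encoded
as multiplication by `w` in the product algebra. -/
noncomputable def scalingField (w : 𝕜 × 𝕜 × 𝕜) : 𝕜 × 𝕜 × 𝕜 →L[𝕜] 𝕜 × 𝕜 × 𝕜 :=
  .mul 𝕜 (𝕜 × 𝕜 × 𝕜) w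

variable (w : 𝕜 × 𝕜 × 𝕜)

lemma isLieEigenfunction_scalingField_fst :
    IsLieEigenfunction (scalingField w) w.1 fun p ↦ p.1 where
  differentiable := differentiable_fst
  fderiv_apply p := by
    rw [fderiv_fst]
    rfl

lemma isLieEigenfunction_scalingField_snd_fst :
    IsLieEigenfunction (scalingField w) w.2.1 fun p ↦ p.2.1 where
  differentiable := differentiable_snd.fst
  fderiv_apply p := by
    rw [(hasFDerivAt_snd (𝕜 := 𝕜)).fst.fderiv]
    rfl

lemma isLieEigenfunction_scalingField_snd_snd :
    IsLieEigenfunction (scalingField w) w.2.2 fun p ↦ p.2.2 where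
  differentiable := differentiable_snd.snd
  fderiv_apply p := by
    rw [(hasFDerivAt_snd (𝕜 := 𝕜)).snd.fderiv]
    rfl

variable {w}

lemma lieBracket_scalingField_eq_smul {μ : 𝕜} {f g h : 𝕜 × 𝕜 × 𝕜 → 𝕜}
    (hf : IsLieEigenfunction (scalingField w) (w.1 + μ) f)
    (hg : IsLieEigenfunction (scalingField w) (w.2.1 + μ) g)
    (hh : IsLieEigenfunction (scalingField w) (w.2.2 + μ) h) (p : 𝕜 × 𝕜 × 𝕜) :
    lieBracket 𝕜 (scalingField w) (fun q ↦ (f q, g q, h q)) p = μ • (f p, g p, h p) := by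
  have hfderiv : fderiv 𝕜 (fun q ↦ (f q, g q, h q)) p (scalingField w p) =
      (w + (μ, μ, μ)) * (f p, g p, h p) := by
    rw [DifferentiableAt.fderiv_prodMk (hf.differentiable p)
        ((hg.differentiable p).prodMk (hh.differentiable p)),
      DifferentiableAt.fderiv_prodMk (hg.differentiable p) (hh.differentiable p)]
    simp only [ContinuousLinearMap.prod_apply, hf.fderiv_apply, hg.fderiv_apply, hh.fderiv_apply]
    rfl
  rw [lieBracket, hfderiv, ContinuousLinearMap.fderiv, add_mul]
  exact add_sub_cancel_left _ _

end Scaling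

section EmdenFowler

variable {𝕜 : Type*} [NontriviallyNormedField 𝕜]

/-- The vector field of the first-order system, in the coordinates `(u, u', t)`, of the
Emden–Fowler equation `u'' = k t⁻ˢ uⁿ`, multiplied by `tˢ` to clear denominators. -/
def emdenFowlerField (k : 𝕜) (n s : ℕ) (x : 𝕜 × 𝕜 × 𝕜) : 𝕜 × 𝕜 × 𝕜 :=
  (x.2.1 * x.2.2 ^ s, k * x.1 ^ n, x.2.2 ^ s)

variable (𝕜) in
/-- The weights of `(u, u', t)` under the scaling symmetry of `u'' = k t⁻ˢ uⁿ`. -/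
def emdenFowlerWeights (n s : ℕ) : 𝕜 × 𝕜 × 𝕜 :=
  (2 - s, n + 1 - s, 1 - n)

lemma differentiable_emdenFowlerField (k : 𝕜) (n s : ℕ) :
    Differentiable 𝕜 (emdenFowlerField k n s) := by
  unfold emdenFowlerField
  fun_prop

theorem lieBracket_scalingField_emdenFowlerField (k : 𝕜) (n s : ℕ) (x : 𝕜 × 𝕜 × 𝕜) :
    lieBracket 𝕜 (scalingField (emdenFowlerWeights 𝕜 n s)) (emdenFowlerField k n s) x =
      ((s - 1) * (1 - n) : 𝕜) • emdenFowlerField k n s x := by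
  set w := emdenFowlerWeights 𝕜 n s with hw
  have hx₃ := (isLieEigenfunction_scalingField_snd_snd w).pow s
  have hX₁ := (isLieEigenfunction_scalingField_snd_fst w).mul hx₃
  have hX₂ := ((isLieEigenfunction_scalingField_fst w).pow n).const_mul k
  have hw₁ : w.2.1 + s * w.2.2 = w.1 + (s - 1) * (1 - n) := by
    simp only [hw, emdenFowlerWeights]
    ring
  have hw₂ : n * w.1 = w.2.1 + (s - 1) * (1 - n) := by
    simp only [hw, emdenFowlerWeights]
    ring
  have hw₃ : s * w.2.2 = w.2.2 + (s - 1) * (1 - n) := by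
    simp only [hw, emdenFowlerWeights]
    ring
  exact lieBracket_scalingField_eq_smul (hw₁ ▸ hX₁) (hw₂ ▸ hX₂) (hw₃ ▸ hx₃) x

lemma volumeContraction_emdenFowlerField_scalingField (k : 𝕜) (n s : ℕ) (x : 𝕜 × 𝕜 × 𝕜) :
    volumeContraction (emdenFowlerField k n s) (scalingField (emdenFowlerWeights 𝕜 n s)) x =
      ![-((n - 1) * k * x.1 ^ n * x.2.2 + (n + 1 - s) * x.2.1 * x.2.2 ^ s),
        x.2.2 ^ s * ((n - 1) * x.2.1 * x.2.2 + (2 - s) * x.1),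
        -(k * (2 - s) * x.1 ^ (n + 1) - (n + 1 - s) * x.2.1 ^ 2 * x.2.2 ^ s)] := by
  simp only [volumeContraction, coords_apply, cross_apply, emdenFowlerField, emdenFowlerWeights,
    scalingField, ContinuousLinearMap.mul_apply', Prod.fst_mul, Prod.snd_mul, Matrix.cons_val]
  congrm ![?_, ?_, ?_] <;> ring

end EmdenFowler

/-- the Emden–Fowler equation `u'' = k·t^m·uⁿ` with `m = −s < 0 < n`
admits a 2-flag: the stated polynomial 1-form annihilates the associated polynomial
vector field `X = (x₂·x₃ˢ, k·x₁ⁿ, x₃ˢ)` and is integrable on all of ℂ³. -/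
theorem stmt_14 (k : ℂ) (n s : ℕ) (hn : 1 ≤ n) (hs : 1 ≤ s)
    (m : ℤ) (hm : m = -(s : ℤ)) :
    let X₁ : ℂ × ℂ × ℂ → ℂ := fun x => x.2.1 * x.2.2 ^ s
    let X₂ : ℂ × ℂ × ℂ → ℂ := fun x => k * x.1 ^ n
    let X₃ : ℂ × ℂ × ℂ → ℂ := fun x => x.2.2 ^ s
    let A₁ : ℂ × ℂ × ℂ → ℂ := fun x =>
      -(((n : ℂ) - 1) * k * x.1 ^ n * x.2.2
        + ((m + (n : ℤ) + 1 : ℤ) : ℂ) * x.2.1 * x.2.2 ^ s)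
    let A₂ : ℂ × ℂ × ℂ → ℂ := fun x =>
      x.2.2 ^ s * (((n : ℂ) - 1) * x.2.1 * x.2.2 + ((m + 2 : ℤ) : ℂ) * x.1)
    let A₃ : ℂ × ℂ × ℂ → ℂ := fun x =>
      -(k * ((m + 2 : ℤ) : ℂ) * x.1 ^ (n + 1)
        - ((m + (n : ℤ) + 1 : ℤ) : ℂ) * x.2.1 ^ 2 * x.2.2 ^ s)
    (∀ x : ℂ × ℂ × ℂ, A₁ x * X₁ x + A₂ x * X₂ x + A₃ x * X₃ x = 0) ∧
    (∀ x : ℂ × ℂ × ℂ, wedgeCoeff A₁ A₂ A₃ x = 0) := by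
  intro X₁ X₂ X₃ A₁ A₂ A₃
  let X := emdenFowlerField k n s
  let Y := scalingField (emdenFowlerWeights ℂ n s)
  have hω (x : ℂ × ℂ × ℂ) : volumeContraction X Y x = ![A₁ x, A₂ x, A₃ x] := by
    rw [volumeContraction_emdenFowlerField_scalingField]
    simp only [A₁, A₂, A₃, hm]
    push_cast
    congrm ![?_, ?_, ?_] <;> ring
  refine ⟨fun x ↦ ?_, fun x ↦ ?_⟩
  · have hωX := volumeContraction_dot_coords_left X Y x
    rwa [hω, coords_apply, Matrix.vec3_dotProduct] at hωX
  · have hint : wedgeCoeff (volumeContraction X Y · 0) (volumeContraction X Y · 1)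
        (volumeContraction X Y · 2) x = 0 :=
      wedgeCoeff_volumeContraction_eq_zero
        (differentiable_emdenFowlerField k n s x) Y.differentiableAt
        (lieBracket_scalingField_emdenFowlerField k n s x)
    simpa only [hω, Matrix.cons_val] using hint
end

section
/- Let V ⊆ ℂ² be open and f : V → ℂ holomorphic, and set U := {(x₁,x₂,x₃) ∈ ℂ³ : (x₁, x₂·x₃) ∈ V} and F(x₁,x₂,x₃) := f(x₁, x₂·x₃). Define on U the vector field X = (x₁x₂x₃, −x₂·F(x), x₁x₃) (associated with the second-order ODE u'' = −u'·f(u, t·u')/(t·u)) and the 1-form ω with coefficients (F(x) − x₁, x₁x₃, x₁x₂). Then ω(X) = 0 at every point of U, and ω satisfies the integrability identity A₁(∂₂A₃ − ∂₃A₂) + A₂(∂₃A₁ − ∂₁A₃) + A₃(∂₁A₂ − ∂₂A₁) = 0 on U. -/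
/-!
The form `ω` is the pullback of `η = (f(u, v) - u) du + u dv` under the map
`φ(x₁, x₂, x₃) = (x₁, x₂x₃)` into the plane. Exterior derivatives and wedge products commute with
pullback, so `ω ∧ dω = φ^*(η ∧ dη)`, and `η ∧ dη` is a 3-form on a plane, hence zero. With
`(u, v) = φ(x)`, the image of `X` under `dφ` is `v · (u ∂ᵤ - (f(u, v) - u) ∂ᵥ)`, which lies in the
kernel of `η`; so `ω(X) = 0`.
-/

open ContinuousAlternatingMap Module

theorem continuousAlternatingMap_eq_zero_of_finrank_lt {K M N : Type*} [Field K]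
    [AddCommGroup M] [Module K M] [TopologicalSpace M] [FiniteDimensional K M]
    [AddCommGroup N] [Module K N] [TopologicalSpace N] {n : ℕ} (hn : finrank K M < n)
    (α : M [⋀^Fin n]→L[K] N) : α = 0 := by
  ext v
  refine α.toAlternatingMap.map_linearDependent v fun hv => hn.not_ge ?_
  simpa using hv.fintype_card_le_finrank

section OneForms

variable {𝕜 E F : Type*} [NontriviallyNormedField 𝕜]
  [NormedAddCommGroup E] [NormedSpace 𝕜 E] [NormedAddCommGroup F] [NormedSpace 𝕜 F]

/-- The wedge product `α ∧ β` of a covector `α` with an alternating map `β`, with the normalization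
in which no factorials occur: `v ↦ α v • β` is summed over the choices of the argument of `α`. -/
noncomputable def covectorWedge {n : ℕ} (α : E →L[𝕜] 𝕜) (β : E [⋀^Fin n]→L[𝕜] 𝕜) :
    E [⋀^Fin (n + 1)]→L[𝕜] 𝕜 :=
  alternatizeUncurryFin (α.smulRight β)

theorem covectorWedge_compContinuousLinearMap {n : ℕ} (α : F →L[𝕜] 𝕜) (β : F [⋀^Fin n]→L[𝕜] 𝕜)
    (L : E →L[𝕜] F) :
    covectorWedge (α.comp L) (β.compContinuousLinearMap L) =
      (covectorWedge α β).compContinuousLinearMap L := by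
  ext v
  simp +unfoldPartialApp [covectorWedge, alternatizeUncurryFin_apply, Fin.removeNth,
    Function.comp_def]

theorem covectorWedge_apply (α : E →L[𝕜] 𝕜) (β : E [⋀^Fin 2]→L[𝕜] 𝕜) (u v w : E) :
    covectorWedge α β ![u, v, w] = α u * β ![v, w] - α v * β ![u, w] + α w * β ![u, v] := by
  have hu : Fin.removeNth 0 ![u, v, w] = ![v, w] := by ext i; fin_cases i <;> rfl
  have hv : Fin.removeNth 1 ![u, v, w] = ![u, w] := by ext i; fin_cases i <;> rfl
  have hw : Fin.removeNth 2 ![u, v, w] = ![u, v] := by ext i; fin_cases i <;> rfl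
  simp [covectorWedge, alternatizeUncurryFin_apply, Fin.sum_univ_three, hu, hv, hw,
    sub_eq_add_neg]

/-- The exterior derivative `dω` of a 1-form `ω`. Mathlib's `extDeriv` differentiates alternating
maps in `Fin n` arguments, so `ω` is first read as an alternating map in one argument. -/
noncomputable def oneFormExtDeriv (ω : E → E →L[𝕜] 𝕜) (x : E) : E [⋀^Fin 2]→L[𝕜] 𝕜 :=
  extDeriv (fun y => ofSubsingleton 𝕜 E 𝕜 (0 : Fin 1) (ω y)) x

/-- The 3-form `ω ∧ dω`, whose vanishing is Frobenius' integrability condition for the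
1-form `ω`. -/
noncomputable def wedgeExtDeriv (ω : E → E →L[𝕜] 𝕜) (x : E) : E [⋀^Fin 3]→L[𝕜] 𝕜 :=
  covectorWedge (ω x) (oneFormExtDeriv ω x)

/-- The pullback `φ^*η` of a 1-form `η` under the map `φ`. -/
noncomputable def oneFormPullback (φ : E → F) (η : F → F →L[𝕜] 𝕜) (x : E) : E →L[𝕜] 𝕜 :=
  (η (φ x)).comp (fderiv 𝕜 φ x)

theorem oneFormExtDeriv_apply (ω : E → E →L[𝕜] 𝕜) (x v w : E) :
    oneFormExtDeriv ω x ![v, w] = fderiv 𝕜 ω x v w - fderiv 𝕜 ω x w v := by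
  let e : (E →L[𝕜] 𝕜) ≃L[𝕜] E [⋀^Fin 1]→L[𝕜] 𝕜 := (ofSubsingletonLIE 0).toContinuousLinearEquiv
  have hfderiv : fderiv 𝕜 (fun y => ofSubsingleton 𝕜 E 𝕜 (0 : Fin 1) (ω y)) x =
      e.toContinuousLinearMap.comp (fderiv 𝕜 ω x) := e.comp_fderiv
  rw [oneFormExtDeriv, extDeriv, hfderiv, alternatizeUncurryFin_apply]
  simp [e, Fin.sum_univ_two, Fin.removeNth, sub_eq_add_neg]

theorem wedgeExtDeriv_apply (ω : E → E →L[𝕜] 𝕜) (x u v w : E) :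
    wedgeExtDeriv ω x ![u, v, w] =
      ω x u * (fderiv 𝕜 ω x v w - fderiv 𝕜 ω x w v) +
      ω x v * (fderiv 𝕜 ω x w u - fderiv 𝕜 ω x u w) +
      ω x w * (fderiv 𝕜 ω x u v - fderiv 𝕜 ω x v u) := by
  rw [wedgeExtDeriv, covectorWedge_apply, oneFormExtDeriv_apply, oneFormExtDeriv_apply,
    oneFormExtDeriv_apply]
  ring

variable {φ : E → F} {η : F → F →L[𝕜] 𝕜} {x : E} {r : WithTop ℕ∞}

theorem differentiableAt_oneFormPullback (hη : DifferentiableAt 𝕜 η (φ x))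
    (hφ : ContDiffAt 𝕜 r φ x) (hr : 2 ≤ r) :
    DifferentiableAt 𝕜 (oneFormPullback φ η) x := by
  have hφ' : DifferentiableAt 𝕜 φ x := hφ.differentiableAt (two_pos.trans_le hr).ne'
  have hfderiv : DifferentiableAt 𝕜 (fderiv 𝕜 φ) x :=
    (hφ.fderiv_right (m := 1) hr).differentiableAt one_ne_zero
  exact (hη.comp x hφ').clm_comp hfderiv

theorem oneFormExtDeriv_pullback (hη : DifferentiableAt 𝕜 η (φ x))
    (hφ : ContDiffAt 𝕜 r φ x) (hr : minSmoothness 𝕜 2 ≤ r) :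
    oneFormExtDeriv (oneFormPullback φ η) x =
      (oneFormExtDeriv η (φ x)).compContinuousLinearMap (fderiv 𝕜 φ x) :=
  extDeriv_pullback (ω := fun p => ofSubsingleton 𝕜 F 𝕜 (0 : Fin 1) (η p))
    ((ofSubsingletonLIE (𝕜 := 𝕜) (E := F) (F := 𝕜) (0 : Fin 1)).differentiableAt.comp
      (φ x) hη) hφ hr

theorem wedgeExtDeriv_pullback (hη : DifferentiableAt 𝕜 η (φ x))
    (hφ : ContDiffAt 𝕜 r φ x) (hr : minSmoothness 𝕜 2 ≤ r) :
    wedgeExtDeriv (oneFormPullback φ η) x =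
      (wedgeExtDeriv η (φ x)).compContinuousLinearMap (fderiv 𝕜 φ x) := by
  rw [wedgeExtDeriv, oneFormExtDeriv_pullback hη hφ hr]
  exact covectorWedge_compContinuousLinearMap ..

theorem wedgeExtDeriv_pullback_eq_zero [FiniteDimensional 𝕜 F] (hF : finrank 𝕜 F ≤ 2)
    (hη : DifferentiableAt 𝕜 η (φ x)) (hφ : ContDiffAt 𝕜 r φ x) (hr : minSmoothness 𝕜 2 ≤ r) :
    wedgeExtDeriv (oneFormPullback φ η) x = 0 := by
  rw [wedgeExtDeriv_pullback hη hφ hr,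
    continuousAlternatingMap_eq_zero_of_finrank_lt (Nat.lt_succ_of_le hF) (wedgeExtDeriv η (φ x))]
  rfl

end OneForms

section Coordinates

variable {x : ℂ × ℂ × ℂ}

theorem d1_eq_fderiv_s15 {g : ℂ × ℂ × ℂ → ℂ} (hg : DifferentiableAt ℂ g x) :
    d1 g x = fderiv ℂ g x (1, 0, 0) :=
  (hg.hasFDerivAt.comp_hasDerivAt x.1
    ((hasDerivAt_id x.1).prodMk (hasDerivAt_const x.1 x.2))).deriv

theorem d2_eq_fderiv_s15 {g : ℂ × ℂ × ℂ → ℂ} (hg : DifferentiableAt ℂ g x) :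
    d2 g x = fderiv ℂ g x (0, 1, 0) :=
  (hg.hasFDerivAt.comp_hasDerivAt x.2.1 ((hasDerivAt_const x.2.1 x.1).prodMk
    ((hasDerivAt_id x.2.1).prodMk (hasDerivAt_const x.2.1 x.2.2)))).deriv

theorem d3_eq_fderiv_s15 {g : ℂ × ℂ × ℂ → ℂ} (hg : DifferentiableAt ℂ g x) :
    d3 g x = fderiv ℂ g x (0, 0, 1) :=
  (hg.hasFDerivAt.comp_hasDerivAt x.2.2 ((hasDerivAt_const x.2.2 x.1).prodMk
    ((hasDerivAt_const x.2.2 x.2.1).prodMk (hasDerivAt_id x.2.2)))).deriv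

theorem wedgeCoeff_eq_wedgeExtDeriv {ω : ℂ × ℂ × ℂ → ℂ × ℂ × ℂ →L[ℂ] ℂ}
    (hω : DifferentiableAt ℂ ω x) :
    wedgeCoeff (fun y => ω y (1, 0, 0)) (fun y => ω y (0, 1, 0)) (fun y => ω y (0, 0, 1)) x =
      wedgeExtDeriv ω x ![(1, 0, 0), (0, 1, 0), (0, 0, 1)] := by
  have hcoeff (v : ℂ × ℂ × ℂ) : DifferentiableAt ℂ (fun y => ω y v) x :=
    hω.clm_apply (differentiableAt_const v)
  have hfderiv (v w : ℂ × ℂ × ℂ) : fderiv ℂ (fun y => ω y v) x w = fderiv ℂ ω x w v := by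
    simp [fderiv_clm_apply hω (differentiableAt_const v)]
  simp only [wedgeCoeff, d1_eq_fderiv_s15 (hcoeff _), d2_eq_fderiv_s15 (hcoeff _),
    d3_eq_fderiv_s15 (hcoeff _), hfderiv, wedgeExtDeriv_apply]

theorem wedgeCoeff_pullback_eq_zero {φ : ℂ × ℂ × ℂ → ℂ × ℂ} {η : ℂ × ℂ → ℂ × ℂ →L[ℂ] ℂ}
    (hη : DifferentiableAt ℂ η (φ x)) (hφ : ContDiffAt ℂ 2 φ x) :
    wedgeCoeff (fun y => oneFormPullback φ η y (1, 0, 0))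
      (fun y => oneFormPullback φ η y (0, 1, 0))
      (fun y => oneFormPullback φ η y (0, 0, 1)) x = 0 := by
  rw [wedgeCoeff_eq_wedgeExtDeriv (differentiableAt_oneFormPullback hη hφ le_rfl),
    wedgeExtDeriv_pullback_eq_zero (by simp) hη hφ (by simp)]
  rfl

theorem fderiv_prodMk_fst_mul (x v : ℂ × ℂ × ℂ) :
    fderiv ℂ (fun y : ℂ × ℂ × ℂ => (y.1, y.2.1 * y.2.2)) x v =
      (v.1, x.2.1 * v.2.2 + x.2.2 * v.2.1) := by
  have hmul : HasFDerivAt (fun y : ℂ × ℂ × ℂ => y.2.1 * y.2.2) _ x :=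
    ((ContinuousLinearMap.fst ℂ ℂ ℂ).comp (.snd ℂ ℂ (ℂ × ℂ))).hasFDerivAt.mul
      ((ContinuousLinearMap.snd ℂ ℂ ℂ).comp (.snd ℂ ℂ (ℂ × ℂ))).hasFDerivAt
  rw [(hasFDerivAt_fst.prodMk hmul).fderiv]
  simp

end Coordinates

/-- for any holomorphic `f` on `V ⊆ ℂ²`, with `F(x) = f(x₁, x₂x₃)`, the
1-form `ω = (F − x₁, x₁x₃, x₁x₂)` annihilates the vector field
`X = (x₁x₂x₃, −x₂·F, x₁x₃)` (associated with `u'' = −u'·f(u, t·u')/(t·u)`) and is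
integrable on `U = {x : (x₁, x₂x₃) ∈ V}`. -/
theorem stmt_15 (V : Set (ℂ × ℂ)) (hV : IsOpen V) (f : ℂ × ℂ → ℂ)
    (hf : DifferentiableOn ℂ f V) :
    let U : Set (ℂ × ℂ × ℂ) := {x | (x.1, x.2.1 * x.2.2) ∈ V}
    let F : ℂ × ℂ × ℂ → ℂ := fun x => f (x.1, x.2.1 * x.2.2)
    let X₁ : ℂ × ℂ × ℂ → ℂ := fun x => x.1 * x.2.1 * x.2.2
    let X₂ : ℂ × ℂ × ℂ → ℂ := fun x => -(x.2.1 * F x)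
    let X₃ : ℂ × ℂ × ℂ → ℂ := fun x => x.1 * x.2.2
    let A₁ : ℂ × ℂ × ℂ → ℂ := fun x => F x - x.1
    let A₂ : ℂ × ℂ × ℂ → ℂ := fun x => x.1 * x.2.2
    let A₃ : ℂ × ℂ × ℂ → ℂ := fun x => x.1 * x.2.1
    (∀ x ∈ U, A₁ x * X₁ x + A₂ x * X₂ x + A₃ x * X₃ x = 0) ∧
    (∀ x ∈ U, wedgeCoeff A₁ A₂ A₃ x = 0) := by
  intro U F X₁ X₂ X₃ A₁ A₂ A₃
  have hωX (x : ℂ × ℂ × ℂ) : A₁ x * X₁ x + A₂ x * X₂ x + A₃ x * X₃ x = 0 := by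
    simp only [A₁, A₂, A₃, X₁, X₂, X₃]
    ring
  refine ⟨fun x _ => hωX x, fun x hx => ?_⟩
  let φ : ℂ × ℂ × ℂ → ℂ × ℂ := fun y => (y.1, y.2.1 * y.2.2)
  let η : ℂ × ℂ → ℂ × ℂ →L[ℂ] ℂ := fun p =>
    (f p - p.1) • ContinuousLinearMap.fst ℂ ℂ ℂ + p.1 • ContinuousLinearMap.snd ℂ ℂ ℂ
  have hη : DifferentiableAt ℂ η (φ x) := by
    have hfx : DifferentiableAt ℂ f (φ x) := hf.differentiableAt (hV.mem_nhds hx)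
    fun_prop
  have hφ : ContDiffAt ℂ 2 φ x := by fun_prop
  have hpullback (y v : ℂ × ℂ × ℂ) :
      oneFormPullback φ η y v = A₁ y * v.1 + A₂ y * v.2.1 + A₃ y * v.2.2 := by
    simp only [oneFormPullback, ContinuousLinearMap.comp_apply, φ, fderiv_prodMk_fst_mul]
    simp only [η, A₁, A₂, A₃, F, _root_.add_apply, _root_.smul_apply,
      ContinuousLinearMap.coe_fst', ContinuousLinearMap.coe_snd', smul_eq_mul]
    ring
  simpa [hpullback] using wedgeCoeff_pullback_eq_zero hη hφ
end

section
/- On ℂ³ with coordinates (x₁,x₂,x₃), define the linear vector field Y = (x₁, x₂, x₃) and the 1-form ω with coefficients (x₂x₃, x₁x₃, −2x₁x₂). Then: (a) ω(Y) = 0 at every point and ω satisfies the integrability identity on ℂ³, so (Y, ω) determines a 2-flag of holomorphic foliations; (b) the singular-set inclusion fails for this flag: there exists a point p (e.g. p = (1,0,0)) with ω(p) = 0 but Y(p) ≠ 0; and (c) the vector field X = (x₁x₂x₃, −(x₂²x₃ − 2x₁x₂), x₁x₃), which has the form (x₂·Q, P, Q) with Q = x₁x₃ and P = −(x₂²x₃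 − 2x₁x₂), satisfies ω(X) = 0 at every point, and every zero of ω is a zero of X: if x₂x₃ = x₁x₃ = x₁x₂ = 0 at p then X(p) = 0. -/
/-!
Dividing `ω = (x₂x₃, x₁x₃, −2x₁x₂)` by `x₁x₂x₃` gives the closed form
`dx₁/x₁ + dx₂/x₂ − 2 dx₃/x₃`, so `ω` is integrable. Its residues `1, 1, −2` sum to zero, so `ω`
kills the radial field; it vanishes on the coordinate axes, the radial field only at the origin.
Finally `X` is the cross product of `ω` with `(−1, 0, x₂)`: this makes it tangent to `ω` and
forces it to vanish wherever `ω` does.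
-/

section LogForm

variable {ι R : Type*} [Fintype ι] [DecidableEq ι] [CommSemiring R]

/-- The coefficients at `x` of the logarithmic 1-form `∑ aᵢ dxᵢ / xᵢ` with residues `a`,
multiplied by `∏ xᵢ` to clear the denominators. -/
def logForm (a x : ι → R) : ι → R := fun i => a i * ∏ j ∈ Finset.univ.erase i, x j

theorem logForm_dotProduct_self (a x : ι → R) :
    logForm a x ⬝ᵥ x = (∑ i, a i) * ∏ i, x i := by
  simp only [dotProduct, logForm, mul_assoc, Finset.prod_erase_mul _ _ (Finset.mem_univ _),
    Finset.sum_mul]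

theorem logForm_eq_zero_of_ne {i j : ι} (hij : i ≠ j) (a : ι → R) {x : ι → R}
    (hi : x i = 0) (hj : x j = 0) : logForm a x = 0 := by
  funext k
  obtain ⟨l, hlk, hl⟩ : ∃ l, l ≠ k ∧ x l = 0 := by
    by_cases hik : i = k
    · exact ⟨j, hik ▸ hij.symm, hj⟩
    · exact ⟨i, hik, hi⟩
  have hprod : ∏ m ∈ Finset.univ.erase k, x m = 0 :=
    Finset.prod_eq_zero (Finset.mem_erase.2 ⟨hlk, Finset.mem_univ l⟩) hl
  rw [logForm, hprod, mul_zero, Pi.zero_apply]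

theorem logForm_fin_three (a b c x y z : R) :
    logForm ![a, b, c] ![x, y, z] = ![a * (y * z), b * (x * z), c * (x * y)] := by
  have h₀ : (Finset.univ : Finset (Fin 3)).erase 0 = {1, 2} := by decide
  have h₁ : (Finset.univ : Finset (Fin 3)).erase 1 = {0, 2} := by decide
  have h₂ : (Finset.univ : Finset (Fin 3)).erase 2 = {0, 1} := by decide
  funext i
  fin_cases i <;> simp [logForm, h₀, h₁, h₂]

end LogForm

-- Dividing by `f(x₁) g(x₂) h(x₃)` turns this form into one with separated variables.
theorem wedgeCoeff_separable_eq_zero (a b c f g h : ℂ → ℂ) (p : ℂ × ℂ × ℂ) :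
    wedgeCoeff (fun x => a x.1 * (g x.2.1 * h x.2.2)) (fun x => b x.2.1 * (f x.1 * h x.2.2))
      (fun x => c x.2.2 * (f x.1 * g x.2.1)) p = 0 := by
  simp only [wedgeCoeff, d1, d2, d3, deriv_const_mul_field', deriv_mul_const_field']
  ring

theorem crossProduct_neg_one_zero {R : Type*} [CommRing R] (A₁ A₂ A₃ t : R) :
    crossProduct ![A₁, A₂, A₃] ![-1, 0, t] = ![t * A₂, -(t * A₁ + A₃), A₂] := by
  rw [cross_apply]
  simp [mul_comm t, add_comm, sub_eq_add_neg]

/-- the flag given by `Y = (x₁, x₂, x₃)` and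
`ω = (x₂x₃, x₁x₃, −2x₁x₂)` is a 2-flag of foliations for which the singular-set
inclusion fails, whereas the vector field `X = (x₂·Q, P, Q)` with `Q = x₁x₃`,
`P = −(x₂²x₃ − 2x₁x₂)` is tangent to `ω` and every zero of `ω` is a zero of `X`. -/
theorem stmt_19 :
    let A₁ : ℂ × ℂ × ℂ → ℂ := fun x => x.2.1 * x.2.2
    let A₂ : ℂ × ℂ × ℂ → ℂ := fun x => x.1 * x.2.2
    let A₃ : ℂ × ℂ × ℂ → ℂ := fun x => -(2 * (x.1 * x.2.1))
    let Y₁ : ℂ × ℂ × ℂ → ℂ := fun x => x.1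
    let Y₂ : ℂ × ℂ × ℂ → ℂ := fun x => x.2.1
    let Y₃ : ℂ × ℂ × ℂ → ℂ := fun x => x.2.2
    let Q : ℂ × ℂ × ℂ → ℂ := fun x => x.1 * x.2.2
    let P : ℂ × ℂ × ℂ → ℂ := fun x => -(x.2.1 ^ 2 * x.2.2 - 2 * (x.1 * x.2.1))
    let X₁ : ℂ × ℂ × ℂ → ℂ := fun x => x.2.1 * Q x
    let X₂ : ℂ × ℂ × ℂ → ℂ := fun x => P x
    let X₃ : ℂ × ℂ × ℂ → ℂ := fun x => Q x
    (∀ x : ℂ × ℂ × ℂ, A₁ x * Y₁ x + A₂ x * Y₂ x + A₃ x * Y₃ x = 0) ∧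
    (∀ x : ℂ × ℂ × ℂ, wedgeCoeff A₁ A₂ A₃ x = 0) ∧
    (∃ p : ℂ × ℂ × ℂ, (A₁ p = 0 ∧ A₂ p = 0 ∧ A₃ p = 0) ∧
      ¬(Y₁ p = 0 ∧ Y₂ p = 0 ∧ Y₃ p = 0)) ∧
    (∀ x : ℂ × ℂ × ℂ, A₁ x * X₁ x + A₂ x * X₂ x + A₃ x * X₃ x = 0) ∧
    (∀ p : ℂ × ℂ × ℂ, A₁ p = 0 → A₂ p = 0 → A₃ p = 0 →
      X₁ p = 0 ∧ X₂ p = 0 ∧ X₃ p = 0) := by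
  intro A₁ A₂ A₃ Y₁ Y₂ Y₃ Q P X₁ X₂ X₃
  have hA (x : ℂ × ℂ × ℂ) :
      ![A₁ x, A₂ x, A₃ x] = logForm ![1, 1, -2] ![Y₁ x, Y₂ x, Y₃ x] := by
    simp [logForm_fin_three, A₁, A₂, A₃, Y₁, Y₂, Y₃]
  have hX (x : ℂ × ℂ × ℂ) :
      ![X₁ x, X₂ x, X₃ x] = crossProduct ![A₁ x, A₂ x, A₃ x] ![-1, 0, x.2.1] := by
    have hP : P x = -(x.2.1 * A₁ x + A₃ x) := by simp only [P, A₁, A₃]; ring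
    rw [crossProduct_neg_one_zero, ← hP]
  refine ⟨fun x => ?_, fun x => ?_, ⟨(1, 0, 0), ?_, by simp [Y₁]⟩, fun x => ?_,
    fun p h₁ h₂ h₃ => ?_⟩
  · have hradial := logForm_dotProduct_self ![1, 1, -2] ![Y₁ x, Y₂ x, Y₃ x]
    have hresidues : ∑ i, (![1, 1, -2] : Fin 3 → ℂ) i = 0 := by
      simp [Fin.sum_univ_three, one_add_one_eq_two]
    rwa [← hA, hresidues, zero_mul, Matrix.vec3_dotProduct'] at hradial
  · simpa [A₁, A₂, A₃] using wedgeCoeff_separable_eq_zero 1 1 (-2) id id id x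
  · have haxis := logForm_eq_zero_of_ne (by decide : (1 : Fin 3) ≠ 2) ![1, 1, -2]
      (x := ![(1 : ℂ), 0, 0]) rfl rfl
    simpa using (hA (1, 0, 0)).trans haxis
  · simpa only [← hX, Matrix.vec3_dotProduct'] using
      dot_self_cross ![A₁ x, A₂ x, A₃ x] ![-1, 0, x.2.1]
  · have hω : ![A₁ p, A₂ p, A₃ p] = 0 := by simp [h₁, h₂, h₃]
    simpa [hω] using hX p
end
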